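/- Let X be a subspace of X_p, let U be a subspace of X with h(U) ≥ β' for some β' with 0 < β' ≤ 1, and let Q be a bounded projection from X onto U which is orthogonal with respect to ⟨·,·⟩ (i.e., ⟨Qx, x − Qx⟩ = 0 for all x ∈ X). Then for every nonzero x ∈ X, ‖Qx‖ ≤ ‖Q‖^{1/2} · r(x)^{1/2} · ‖x‖ / β'. -/

import Mathlib

open scoped ENNReal

noncomputable section

/-- The sequence space `ℓ_p` (of real sequences), for a real exponent `p`. -/
abbrev SeqP (p : ℝ) := lp (fun _ : ℕ => ℝ) (ENNReal.ofReal p)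

/-- The sequence space `ℓ_2` (of real sequences). -/
abbrev Seq2 := lp (fun _ : ℕ => ℝ) 2

/-- The space `X_{p,w}`, realized as the submodule of `ℓ_p ⊕_∞ ℓ_2` consisting of the
pairs `(x, y)` with `y n = w n * x n`.  Since the norm on the product is the maximum of
the two norms, this is exactly the completion of the finitely supported sequences under
`‖a‖ = max {|a|_p, |a|_{2,w}}`, the element with coordinates `a` being identified with
the pair `(a, w·a)`. -/
def XpwMod (p : ℝ) (w : ℕ → ℝ) : Submodule ℝ (SeqP p × Seq2) where
  carrier := {z | ∀ n, (z.2 : ℕ → ℝ) n = w n * (z.1 : ℕ → ℝ) n}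
  add_mem' := by
    intro a b ha hb n
    simp only [Prod.fst_add, Prod.snd_add, lp.coeFn_add, Pi.add_apply, ha n, hb n]
    ring
  zero_mem' := by
    intro n
    simp
  smul_mem' := by
    intro c a ha n
    simp only [Prod.smul_fst, Prod.smul_snd, lp.coeFn_smul, Pi.smul_apply, ha n,
      smul_eq_mul]
    ring

/-- The space `X_{p,w}` with its natural norm `‖a‖ = max {|a|_p, |a|_{2,w}}`. -/
def Xpw (p : ℝ) (w : ℕ → ℝ) : Type := ↥(XpwMod p w)

variable {p : ℝ} {w : ℕ → ℝ}

instance [Fact (1 ≤ ENNReal.ofReal p)] : NormedAddCommGroup (Xpw p w) :=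
  inferInstanceAs (NormedAddCommGroup ↥(XpwMod p w))

instance [Fact (1 ≤ ENNReal.ofReal p)] : NormedSpace ℝ (Xpw p w) :=
  inferInstanceAs (NormedSpace ℝ ↥(XpwMod p w))

/-- The pair of coordinates (in `ℓ_p` and in weighted `ℓ_2`) of an element of `X_{p,w}`. -/
def Xpw.pair (x : Xpw p w) : SeqP p × Seq2 := (show ↥(XpwMod p w) from x).val

/-- The underlying sequence of coordinates of an element of `X_{p,w}`. -/
def seq (x : Xpw p w) : ℕ → ℝ := (Xpw.pair x).1

/-- `|x|_p` for `x ∈ X_{p,w}`. -/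
def nrmP (x : Xpw p w) : ℝ := ‖(Xpw.pair x).1‖

/-- `|x|_2 = |x|_{2,w}` for `x ∈ X_{p,w}`. -/
def nrm2 (x : Xpw p w) : ℝ := ‖(Xpw.pair x).2‖

/-- The ratio `r(x) = |x|_2 / |x|_p`. -/
def ratio (x : Xpw p w) : ℝ := nrm2 x / nrmP x

/-- `ω(E) = ∑_{n ∈ E} w_n^{2p/(p-2)}`. -/
def omegaE (p : ℝ) (w : ℕ → ℝ) (E : Set ℕ) : ℝ :=
  ∑' n : E, w (n : ℕ) ^ (2 * p / (p - 2))

/-- The pairing `⟨x, y⟩ = ∑_n x_n y_n w_n²`. -/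
def pairW (w : ℕ → ℝ) (x y : Xpw p w) : ℝ :=
  ∑' n, seq x n * seq y n * w n ^ 2

/-- `w` is a weight sequence suitable for Rosenthal's space `X_p`: it is positive and for
every `ε > 0`, `∑_{w_n < ε} w_n^{2p/(p-2)} = ∞`. -/
def IsXpWeight (p : ℝ) (w : ℕ → ℝ) : Prop :=
  (∀ n, 0 < w n) ∧
    ∀ ε : ℝ, 0 < ε →
      (∑' n : {n : ℕ | w n < ε}, ENNReal.ofReal (w (n : ℕ) ^ (2 * p / (p - 2)))) = ⊤

theorem memℓp_indicator {q : ℝ≥0∞} (E : Set ℕ) {f : ℕ → ℝ} (hf : Memℓp f q) :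
    Memℓp (E.indicator f) q := by
  rcases ENNReal.trichotomy q with hq | hq | hq
  · subst hq
    refine memℓp_zero ((memℓp_zero_iff.mp hf).subset ?_)
    intro i hi
    simp only [Set.mem_setOf_eq] at hi ⊢
    intro h
    exact hi (by simp [Set.indicator_apply, h])
  · subst hq
    obtain ⟨C, hC⟩ := (memℓp_infty_iff.mp hf)
    refine memℓp_infty ⟨C, ?_⟩
    rintro x ⟨i, rfl⟩
    exact le_trans (norm_indicator_le_norm_self f i) (hC ⟨i, rfl⟩)
  · refine memℓp_gen (Summable.of_nonneg_of_le (fun i => ?_) (fun i => ?_)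
      (hf.summable hq))
    · positivity
    · exact Real.rpow_le_rpow (norm_nonneg _) (norm_indicator_le_norm_self f i) hq.le

/-- The restriction `x ↦ x_{|E}` of elements of `X_{p,w}` to a set `E` of coordinates. -/
def restrict (E : Set ℕ) (x : Xpw p w) : Xpw p w :=
  show ↥(XpwMod p w) from
  ⟨(⟨E.indicator ((Xpw.pair x).1 : ℕ → ℝ), memℓp_indicator E (lp.memℓp (Xpw.pair x).1)⟩,
    ⟨E.indicator ((Xpw.pair x).2 : ℕ → ℝ), memℓp_indicator E (lp.memℓp (Xpw.pair x).2)⟩), by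
    intro n
    by_cases hn : n ∈ E
    · have hx : ((Xpw.pair x).2 : ℕ → ℝ) n = w n * ((Xpw.pair x).1 : ℕ → ℝ) n :=
        (show ↥(XpwMod p w) from x).2 n
      simpa [Set.indicator_of_mem hn] using hx
    · simp [Set.indicator_of_notMem hn]⟩

theorem pair_snd_apply (x : Xpw p w) (n : ℕ) :
    ((Xpw.pair x).2 : ℕ → ℝ) n = w n * seq x n :=
  (show ↥(XpwMod p w) from x).2 n

theorem pairW_eq_inner (x y : Xpw p w) :
    pairW w x y = inner ℝ (Xpw.pair x).2 (Xpw.pair y).2 := by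
  rw [lp.inner_eq_tsum]
  unfold pairW
  congr 1
  funext n
  rw [pair_snd_apply, pair_snd_apply]
  simp only [RCLike.inner_apply, conj_trivial]
  ring

theorem nrm2_le_of_pairW [Fact (1 ≤ ENNReal.ofReal p)] (x q : Xpw p w)
    (h : pairW w q (x - q) = 0) : nrm2 q ≤ nrm2 x := by
  rw [pairW_eq_inner] at h
  have h2 : (Xpw.pair (x - q)).2 = (Xpw.pair x).2 - (Xpw.pair q).2 := rfl
  rw [h2, inner_sub_right, real_inner_self_eq_norm_sq] at h
  have h3 := real_inner_le_norm (Xpw.pair q).2 (Xpw.pair x).2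
  unfold nrm2
  by_contra! hc
  have : 0 < ‖(Xpw.pair q).2‖ := lt_of_le_of_lt (norm_nonneg _) hc
  nlinarith

theorem norm_eq_max [Fact (1 ≤ ENNReal.ofReal p)] (x : Xpw p w) :
    ‖x‖ = max (nrmP x) (nrm2 x) := rfl

theorem nrmP_pos [Fact (1 ≤ ENNReal.ofReal p)] (x : Xpw p w) (hx : x ≠ 0) :
    0 < nrmP x := by
  unfold nrmP
  rw [norm_pos_iff]
  intro h
  apply hx
  have h2 : (Xpw.pair x).2 = 0 := by
    ext n
    rw [pair_snd_apply]
    simp [seq, h]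
  exact Subtype.ext (Prod.ext h h2)

/-- key estimate in Proposition 2.6: if `U ⊆ X ⊆ X_p` with
`h(U) ≥ β'` for some `0 < β' ≤ 1`, and `Q` is a bounded projection from `X` onto `U`
which is orthogonal with respect to `⟨·,·⟩`, then for every nonzero `x ∈ X`,
`‖Qx‖ ≤ ‖Q‖^{1/2} r(x)^{1/2} ‖x‖ / β'`. -/
theorem stmt19 (p : ℝ) (hp : 2 < p) [Fact (1 ≤ ENNReal.ofReal p)]
    (w : ℕ → ℝ) (hw : IsXpWeight p w)
    (X U : Submodule ℝ (Xpw p w)) (hUX : U ≤ X)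
    (β' : ℝ) (hβ'0 : 0 < β') (hβ'1 : β' ≤ 1)
    (hU : ∀ u ∈ U, u ≠ 0 → ratio u ≥ β')
    (Q : ↥X →L[ℝ] ↥X)
    (hQU : ∀ x : ↥X, (Q x : Xpw p w) ∈ U)
    (hQid : ∀ x : ↥X, (x : Xpw p w) ∈ U → Q x = x)
    (horth : ∀ x : ↥X, pairW w ((Q x : Xpw p w)) ((x : Xpw p w) - (Q x : Xpw p w)) = 0) :
    ∀ x : ↥X, x ≠ 0 →
      ‖Q x‖ ≤ ‖Q‖ ^ ((1 : ℝ) / 2) * ratio (x : Xpw p w) ^ ((1 : ℝ) / 2) * ‖x‖ / β' := by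
  intro x hx
  have hP0 : ∀ y : Xpw p w, 0 ≤ nrmP y := fun y => norm_nonneg _
  have h20 : ∀ y : Xpw p w, 0 ≤ nrm2 y := fun y => norm_nonneg _
  have hr0 : 0 ≤ ratio (x : Xpw p w) := div_nonneg (h20 _) (hP0 _)
  by_cases hq : Q x = 0
  · rw [hq, norm_zero]
    have := norm_nonneg x
    have := norm_nonneg Q
    positivity
  have hx' : (x : Xpw p w) ≠ 0 := fun h => hx (Subtype.ext h)
  have hq' : (Q x : Xpw p w) ≠ 0 := fun h => hq (Subtype.ext h)
  have hQ1 : 1 ≤ ‖Q‖ := by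
    have h1 := Q.le_opNorm (Q x)
    rw [hQid _ (hQU x)] at h1
    have h2 : 0 < ‖Q x‖ := norm_pos_iff.mpr hq
    by_contra! hc
    nlinarith
  have hle := nrm2_le_of_pairW _ _ (horth x)
  have hr := hU _ (hQU x) hq'
  have hqP := nrmP_pos _ hq'
  have hxP := nrmP_pos _ hx'
  have hnq : ‖Q x‖ * β' ≤ nrm2 (Q x : Xpw p w) := by
    have e : ‖Q x‖ = max (nrmP (Q x : Xpw p w)) (nrm2 (Q x : Xpw p w)) := rfl
    unfold ratio at hr
    rw [ge_iff_le, le_div_iff₀ hqP] at hr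
    rw [e]
    rcases max_cases (nrmP (Q x : Xpw p w)) (nrm2 (Q x : Xpw p w)) with h | h
    · rw [h.1]; linarith
    · rw [h.1]; nlinarith [h20 (Q x : Xpw p w)]
  have hxn : nrm2 (x : Xpw p w) ≤ ratio (x : Xpw p w) ^ ((1 : ℝ) / 2) * ‖x‖ := by
    have e : ‖x‖ = max (nrmP (x : Xpw p w)) (nrm2 (x : Xpw p w)) := rfl
    have e1 : nrmP (x : Xpw p w) ≤ ‖x‖ := e ▸ le_max_left _ _
    have e2 : nrm2 (x : Xpw p w) ≤ ‖x‖ := e ▸ le_max_right _ _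
    have e3 : nrm2 (x : Xpw p w) = ratio (x : Xpw p w) * nrmP (x : Xpw p w) := by
      unfold ratio
      field_simp
    rw [← Real.sqrt_eq_rpow]
    refine (sq_le_sq₀ (h20 _) (by positivity)).mp ?_
    rw [mul_pow, Real.sq_sqrt hr0]
    calc nrm2 (x : Xpw p w) ^ 2
        = ratio (x : Xpw p w) * (nrmP (x : Xpw p w) * nrm2 (x : Xpw p w)) := by
          rw [sq, ← mul_assoc, ← e3]
      _ ≤ ratio (x : Xpw p w) * (‖x‖ * ‖x‖) := by
          gcongr
          exact h20 _
      _ = _ := by ring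
  have hQ2 : 1 ≤ ‖Q‖ ^ ((1 : ℝ) / 2) := Real.one_le_rpow hQ1 (by norm_num)
  rw [le_div_iff₀ hβ'0, mul_assoc]
  have hpos : 0 ≤ ratio (x : Xpw p w) ^ ((1 : ℝ) / 2) * ‖x‖ := (h20 _).trans hxn
  calc ‖Q x‖ * β' ≤ ratio (x : Xpw p w) ^ ((1 : ℝ) / 2) * ‖x‖ := hnq.trans (hle.trans hxn)
    _ ≤ _ := le_mul_of_one_le_left hpos hQ2
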